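/- Let U and V be real symmetric n×n matrices with U positive semidefinite and V positive definite, and let 𝛀 be the unique symmetric positive definite solution of the Riccati equation 𝛀 + 𝛀 U 𝛀 = V. Then tr(U + V) − tr √( I_n + 4 √V U √V ) − log det 𝛀 ≥ 0, where √M denotes the positive semidefinite symmetric square root; moreover, equality holds if and only if V = I_n + U (equivalently, if and only if 𝛀 = I_n). -/

import Mathlib

open Matrix

/-!
Write `V = S Sᴴ`. Conjugating the Riccati equation by `Ω⁻¹` gives `Ω⁻¹ V Ω⁻¹ = Ω⁻¹ + U`, so
`X = Sᴴ Ω⁻¹ S` satisfies `X² = X + Sᴴ U S`. Hence `X ≥ 1` and `(2X - 1)² = 1 + 4 Sᴴ U S`, that is,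
`2X - 1` is the square root in the statement. Its trace is `n + 2 tr (ΩU)`, and therefore
`tr (U + V) - tr W - log det Ω = (tr Ω - n - log det Ω) + tr ((Ω - 1) U (Ω - 1))`.
Both summands are nonnegative, and the first vanishes only at `Ω = 1`. Moreover `2X - 1`, and with
it `Ω`, is determined by `U` and `S`, so `V = 1 + U` forces `Ω = 1`.
-/

section RiccatiAlgebra

variable {R ι κ : Type*} [CommRing R] [Fintype ι] [DecidableEq ι]

lemma inv_mul_add_mul_mul_inv {Om : Matrix ι ι R} (hOm : IsUnit Om) (U : Matrix ι ι R) :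
    Om⁻¹ * (Om + Om * U * Om) * Om⁻¹ = Om⁻¹ + U := by
  have hdet := (isUnit_iff_isUnit_det Om).mp hOm
  calc Om⁻¹ * (Om + Om * U * Om) * Om⁻¹
      = Om⁻¹ * Om * Om⁻¹ + Om⁻¹ * Om * U * (Om * Om⁻¹) := by noncomm_ring
    _ = Om⁻¹ + U := by rw [nonsing_inv_mul Om hdet, mul_nonsing_inv Om hdet]; simp

lemma mul_inv_mul_mul_self_of_riccati [Fintype κ] {U Om : Matrix ι ι R} {S : Matrix ι κ R}
    {T : Matrix κ ι R} (hOm : IsUnit Om) (hR : Om + Om * U * Om = S * T) :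
    T * Om⁻¹ * S * (T * Om⁻¹ * S) = T * Om⁻¹ * S + T * U * S := by
  calc T * Om⁻¹ * S * (T * Om⁻¹ * S) = T * (Om⁻¹ * (S * T) * Om⁻¹) * S := by
        simp only [Matrix.mul_assoc]
    _ = T * (Om⁻¹ + U) * S := by rw [← hR, inv_mul_add_mul_mul_inv hOm]
    _ = T * Om⁻¹ * S + T * U * S := by rw [Matrix.mul_add, Matrix.add_mul]

lemma trace_mul_inv_mul_of_riccati [Fintype κ] {U Om : Matrix ι ι R} {S : Matrix ι κ R}
    {T : Matrix κ ι R} (hOm : IsUnit Om) (hR : Om + Om * U * Om = S * T) :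
    (T * Om⁻¹ * S).trace = Fintype.card ι + (Om * U).trace := by
  have hdet := (isUnit_iff_isUnit_det Om).mp hOm
  calc (T * Om⁻¹ * S).trace = ((Om + Om * U * Om) * Om⁻¹).trace := by
        rw [trace_mul_cycle, hR]
    _ = (1 + Om * U).trace := by
        rw [Matrix.add_mul, mul_nonsing_inv Om hdet, mul_nonsing_inv_cancel_right Om _ hdet]
    _ = Fintype.card ι + (Om * U).trace := by rw [trace_add, trace_one]

end RiccatiAlgebra

section HermitianConjugation

variable {R ι : Type*} [Ring R] [PartialOrder R] [StarRing R] [Fintype ι] {A B : Matrix ι ι R}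

lemma posSemidef_mul_mul_of_isHermitian (hA : A.PosSemidef) (hB : B.IsHermitian) :
    (B * A * B).PosSemidef := by
  simpa only [hB.eq] using hA.conjTranspose_mul_mul_same B

lemma posDef_add_mul_mul [AddLeftMono R] (hA : A.PosSemidef) (hB : B.PosDef) :
    (B + B * A * B).PosDef :=
  hB.add_posSemidef (posSemidef_mul_mul_of_isHermitian hA hB.1)

end HermitianConjugation

section RCLikeMatrices

open scoped ComplexOrder MatrixOrder

variable {𝕜 ι : Type*} [RCLike 𝕜] [Fintype ι] {A X U S W Om : Matrix ι ι 𝕜}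

section Decidable

variable [DecidableEq ι]

lemma re_trace_sub_card_sub_log_det (hA : A.PosDef) :
    RCLike.re A.trace - Fintype.card ι - Real.log (RCLike.re A.det) =
      ∑ i, (hA.1.eigenvalues i - 1 - Real.log (hA.1.eigenvalues i)) := by
  have hdet : RCLike.re A.det = ∏ i, hA.1.eigenvalues i := by
    rw [hA.1.det_eq_prod_eigenvalues, ← RCLike.ofReal_prod, RCLike.ofReal_re]
  have htrace : RCLike.re A.trace = ∑ i, hA.1.eigenvalues i := by
    rw [hA.1.trace_eq_sum_eigenvalues, ← RCLike.ofReal_sum, RCLike.ofReal_re]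
  rw [hdet, htrace, Real.log_prod fun i _ ↦ (hA.eigenvalues_pos i).ne']
  simp [Finset.sum_sub_distrib]

lemma eigenvalue_sub_one_sub_log_nonneg (hA : A.PosDef) (i : ι) :
    0 ≤ hA.1.eigenvalues i - 1 - Real.log (hA.1.eigenvalues i) :=
  sub_nonneg.mpr (Real.log_le_sub_one_of_pos (hA.eigenvalues_pos i))

lemma re_trace_sub_card_sub_log_det_nonneg (hA : A.PosDef) :
    0 ≤ RCLike.re A.trace - Fintype.card ι - Real.log (RCLike.re A.det) := by
  rw [re_trace_sub_card_sub_log_det hA]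
  exact Finset.sum_nonneg fun i _ ↦ eigenvalue_sub_one_sub_log_nonneg hA i

lemma eq_one_of_eigenvalues_eq_one (hA : A.IsHermitian) (h : ∀ i, hA.eigenvalues i = 1) :
    A = 1 := by
  have hdiag : (RCLike.ofReal ∘ hA.eigenvalues : ι → 𝕜) = 1 := by
    funext i
    simp [h i]
  rw [hA.spectral_theorem, hdiag, diagonal_one', map_one]

lemma re_trace_sub_card_sub_log_det_eq_zero_iff (hA : A.PosDef) :
    RCLike.re A.trace - Fintype.card ι - Real.log (RCLike.re A.det) = 0 ↔ A = 1 := by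
  refine ⟨fun h ↦ eq_one_of_eigenvalues_eq_one hA.1 fun i ↦ ?_, ?_⟩
  · rw [re_trace_sub_card_sub_log_det hA, Finset.sum_eq_zero_iff_of_nonneg
      fun i _ ↦ eigenvalue_sub_one_sub_log_nonneg hA i] at h
    by_contra hne
    have hlt := Real.log_lt_sub_one_of_pos (hA.eigenvalues_pos i) hne
    linarith [h i (Finset.mem_univ i)]
  · rintro rfl
    simp

lemma one_le_of_le_mul_self (hX : X.PosDef) (h : X ≤ X * X) : 1 ≤ X := by
  have hdet := (isUnit_iff_isUnit_det X).mp hX.isUnit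
  have hinv : (X⁻¹ * (X * X - X) * X⁻¹).PosSemidef :=
    posSemidef_mul_mul_of_isHermitian (le_iff.mp h) hX.inv.1
  have hsub : ((X - 1) * X⁻¹ * (X - 1)).PosSemidef :=
    posSemidef_mul_mul_of_isHermitian hX.inv.posSemidef (hX.1.sub isHermitian_one)
  have hdecomp : X⁻¹ * (X * X - X) * X⁻¹ + (X - 1) * X⁻¹ * (X - 1) = X - 1 := by
    simp only [mul_sub, sub_mul, mul_one, one_mul, nonsing_inv_mul_cancel_left X _ hdet,
      mul_nonsing_inv X hdet, nonsing_inv_mul X hdet]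
    abel
  exact le_iff.mpr (hdecomp ▸ hinv.add hsub)

open scoped Matrix.Norms.L2Operator in
lemma eq_two_smul_sub_one (hX : X.PosDef) (h : X ≤ X * X) (hW : W.PosSemidef)
    (hWW : W * W = 1 + (4 : ℝ) • (X * X - X)) : W = (2 : ℝ) • X - 1 := by
  have hnonneg : 0 ≤ (2 : ℝ) • X - 1 := by
    have hsum : (2 : ℝ) • X - 1 = X + (X - 1) := by module
    rw [hsum]
    exact add_nonneg hX.posSemidef.nonneg (sub_nonneg.mpr (one_le_of_le_mul_self hX h))
  have hsq : ((2 : ℝ) • X - 1) * ((2 : ℝ) • X - 1) = 1 + (4 : ℝ) • (X * X - X) := by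
    simp only [mul_sub, sub_mul, mul_one, one_mul, smul_mul_assoc, mul_smul_comm]
    module
  exact (CFC.mul_self_eq_mul_self_iff W _ hW.nonneg hnonneg).mp (hWW.trans hsq.symm)

lemma isUnit_of_riccati (hU : U.PosSemidef) (hOm : Om.PosDef)
    (hR : Om + Om * U * Om = S * Sᴴ) : IsUnit S :=
  isUnit_of_mul_isUnit_left (hR ▸ (posDef_add_mul_mul hU hOm).isUnit)

lemma sqrt_eq_of_riccati (hU : U.PosSemidef) (hOm : Om.PosDef)
    (hR : Om + Om * U * Om = S * Sᴴ) (hW : W.PosSemidef)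
    (hWW : W * W = 1 + (4 : ℝ) • (Sᴴ * U * S)) : W = (2 : ℝ) • (Sᴴ * Om⁻¹ * S) - 1 := by
  have hX : (Sᴴ * Om⁻¹ * S).PosDef :=
    (isUnit_of_riccati hU hOm hR).posDef_star_left_conjugate_iff.mpr hOm.inv
  have hXX := mul_inv_mul_mul_self_of_riccati hOm.isUnit hR
  refine eq_two_smul_sub_one hX ?_ hW ?_
  · rw [hXX]
    exact le_add_of_nonneg_right (hU.conjTranspose_mul_mul_same S).nonneg
  · rw [hXX, add_sub_cancel_left, hWW]

lemma trace_add_sub_trace_sqrt_of_riccati (hU : U.PosSemidef) (hOm : Om.PosDef)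
    (hR : Om + Om * U * Om = S * Sᴴ) (hW : W.PosSemidef)
    (hWW : W * W = 1 + (4 : ℝ) • (Sᴴ * U * S)) :
    (U + S * Sᴴ).trace - W.trace =
      Om.trace - Fintype.card ι + ((Om - 1) * U * (Om - 1)).trace := by
  have hWtrace : W.trace = Fintype.card ι + 2 * (Om * U).trace := by
    rw [sqrt_eq_of_riccati hU hOm hR hW hWW, trace_sub, trace_smul, trace_one,
      trace_mul_inv_mul_of_riccati hOm.isUnit hR, ofNat_smul_eq_nsmul, nsmul_eq_mul]
    push_cast
    ring
  have hexpand : (Om - 1) * U * (Om - 1) = Om * U * Om - Om * U - U * Om + U := by noncomm_ring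
  rw [hWtrace, hexpand, ← hR]
  simp only [trace_add, trace_sub, trace_mul_comm U Om]
  ring

end Decidable

open scoped Matrix.Norms.L2Operator in
lemma riccati_posDef_solution_unique {Om' : Matrix ι ι 𝕜} (hU : U.PosSemidef)
    (hOm : Om.PosDef) (hOm' : Om'.PosDef)
    (h : Om + Om * U * Om = Om' + Om' * U * Om') : Om = Om' := by
  classical
  obtain ⟨S, hS⟩ := CStarAlgebra.nonneg_iff_eq_mul_star_self.mp
    (posDef_add_mul_mul hU hOm).posSemidef.nonneg
  have hSunit : IsUnit S := isUnit_of_riccati hU hOm hS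
  have hnonneg : 0 ≤ 1 + (4 : ℝ) • (Sᴴ * U * S) :=
    (PosSemidef.one.add ((hU.conjTranspose_mul_mul_same S).smul zero_le_four)).nonneg
  have hsqrt := (CFC.sqrt_nonneg (1 + (4 : ℝ) • (Sᴴ * U * S))).posSemidef
  have hsqrt_sq := CFC.sqrt_mul_sqrt_self _ hnonneg
  have hX : (2 : ℝ) • (Sᴴ * Om⁻¹ * S) = (2 : ℝ) • (Sᴴ * Om'⁻¹ * S) :=
    sub_left_injective ((sqrt_eq_of_riccati hU hOm hS hsqrt hsqrt_sq).symm.trans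
      (sqrt_eq_of_riccati hU hOm' (h.symm.trans hS) hsqrt hsqrt_sq))
  have hinv : Om⁻¹ = Om'⁻¹ :=
    hSunit.star.mul_left_cancel (hSunit.mul_right_cancel (smul_right_injective _ two_ne_zero hX))
  exact inv_inj hinv ((isUnit_iff_isUnit_det Om).mp hOm.isUnit)

lemma riccati_eq_one_add_iff [DecidableEq ι] (hU : U.PosSemidef) (hOm : Om.PosDef) :
    Om + Om * U * Om = 1 + U ↔ Om = 1 := by
  refine ⟨fun h ↦ riccati_posDef_solution_unique hU hOm .one ?_, ?_⟩
  · rw [h, one_mul, mul_one]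
  · rintro rfl
    rw [one_mul, mul_one]

theorem covariance_part_nonneg_general [DecidableEq ι] {V : Matrix ι ι 𝕜} (hU : U.PosSemidef)
    (hS : S * Sᴴ = V) (hW : W.PosSemidef) (hWW : W * W = 1 + (4 : ℝ) • (Sᴴ * U * S))
    (hOm : Om.PosDef) (hR : Om + Om * U * Om = V) :
    0 ≤ RCLike.re ((U + V).trace - W.trace) - Real.log (RCLike.re Om.det) ∧
    (RCLike.re ((U + V).trace - W.trace) - Real.log (RCLike.re Om.det) = 0 ↔ V = 1 + U) ∧
    (V = 1 + U ↔ Om = 1) := by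
  have hV_iff : V = 1 + U ↔ Om = 1 := hR ▸ riccati_eq_one_add_iff hU hOm
  have hlog := re_trace_sub_card_sub_log_det_nonneg hOm
  have hlog_iff := re_trace_sub_card_sub_log_det_eq_zero_iff hOm
  have hquad : 0 ≤ RCLike.re ((Om - 1) * U * (Om - 1)).trace :=
    (RCLike.nonneg_iff.mp (posSemidef_mul_mul_of_isHermitian hU
      (hOm.1.sub isHermitian_one)).trace_nonneg).1
  have hsplit : RCLike.re ((U + V).trace - W.trace) - Real.log (RCLike.re Om.det) =
      (RCLike.re Om.trace - Fintype.card ι - Real.log (RCLike.re Om.det)) +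
        RCLike.re ((Om - 1) * U * (Om - 1)).trace := by
    rw [← hS, trace_add_sub_trace_sqrt_of_riccati hU hOm (hR.trans hS.symm) hW hWW]
    simp only [map_add, map_sub, RCLike.natCast_re]
    ring
  rw [hV_iff, hsplit]
  refine ⟨add_nonneg hlog hquad, ⟨fun h ↦ hlog_iff.mp (by linarith), ?_⟩, .rfl⟩
  rintro rfl
  simp

end RCLikeMatrices

/-- Nonnegativity of the "covariance part" of the minimum required supply:
if `Ω` is the unique positive definite solution of the Riccati equation `Ω + ΩUΩ = V`
(`U` positive semidefinite, `V` positive definite), then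
`tr(U + V) − tr √(I + 4 √V U √V) − log det Ω ≥ 0`, with equality iff `V = I + U`
(equivalently, iff `Ω = I`).  Here `sV` is the positive semidefinite symmetric square root
of `V` and `W` that of `I + 4 √V U √V`. -/
theorem covariance_part_nonneg
    {n : ℕ} (U V : Matrix (Fin n) (Fin n) ℝ) (hU : U.PosSemidef) (hV : V.PosDef)
    (sV : Matrix (Fin n) (Fin n) ℝ) (hsV : sV.PosSemidef ∧ sV * sV = V)
    (W : Matrix (Fin n) (Fin n) ℝ)
    (hW : W.PosSemidef ∧ W * W = 1 + (4 : ℝ) • (sV * U * sV))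
    (Om : Matrix (Fin n) (Fin n) ℝ) (hOm : Om.PosDef ∧ Om + Om * U * Om = V) :
    0 ≤ (U + V).trace - W.trace - Real.log Om.det ∧
    ((U + V).trace - W.trace - Real.log Om.det = 0 ↔ V = 1 + U) ∧
    (V = 1 + U ↔ Om = 1) := by
  have hsV_star : sVᴴ = sV := hsV.1.1
  simpa using covariance_part_nonneg_general (S := sV) hU (by rw [hsV_star, hsV.2]) hW.1
    (by rw [hsV_star, hW.2]) hOm.1 hOm.2
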